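/- arXiv:1801.00582 — 2 statements merged into one kernel-verified Lean document; each statement's English description precedes it below -/
import Mathlib

section
/- (Connes–Moscovici deformation) Let R be a commutative C-algebra, let V and W be derivations of R with W∘V − V∘W = 2V. For n ≥ 0 define χ_n(f,g) = Σ_{r=0}^n ((−1)^r / (r!(n−r)!)) · (V^r ∘ (W+r·Id)^{<n−r>})(f) · (V^{n−r} ∘ (W+(n−r)·Id)^{<r>})(g), where for a derivation F the Pochhammer iterate is F^{<0>} = Id and F^{<m>} = F^{<m−1>} ∘ (F + (m−1)Id). Then (χ_n)_{n≥0} is a formal deformation of R (χ_0 is the product and the associated star product on R[[ħ]] is associative). -/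
open Finset

/-- The Pochhammer iterate `F^{<m>}` of a linear map: `F^{<0>} = Id`,
`F^{<m>} = F^{<m−1>} ∘ (F + (m−1)·Id)`. -/
noncomputable def pochIter {A : Type*} [CommRing A] [Algebra ℂ A]
    (F : A →ₗ[ℂ] A) : ℕ → A →ₗ[ℂ] A
  | 0 => LinearMap.id
  | (m + 1) => (pochIter F m) ∘ₗ (F + (m : ℂ) • LinearMap.id)

open scoped TensorProduct

set_option synthInstance.maxHeartbeats 400000

namespace CM

/-- Symbols: polynomials in two commuting variables. -/
abbrev Sy := MvPolynomial (Fin 2) ℂ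

/-- the primitive coproduct on symbols -/
noncomputable def cop : Sy →ₐ[ℂ] Sy ⊗[ℂ] Sy :=
  MvPolynomial.aeval (fun i => (MvPolynomial.X i : Sy) ⊗ₜ[ℂ] (1 : Sy) + (1 : Sy) ⊗ₜ[ℂ] MvPolynomial.X i)

/-- the Poisson symbol -/
noncomputable def Poi : Sy ⊗[ℂ] Sy :=
  (MvPolynomial.X 0 : Sy) ⊗ₜ[ℂ] (MvPolynomial.X 1 : Sy) - (MvPolynomial.X 1 : Sy) ⊗ₜ[ℂ] (MvPolynomial.X 0 : Sy)

/-- extension of a linear map to the tensor square as for a derivation -/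
noncomputable def dtwo (d : Sy →ₗ[ℂ] Sy) : Sy ⊗[ℂ] Sy →ₗ[ℂ] Sy ⊗[ℂ] Sy :=
  TensorProduct.map d LinearMap.id + TensorProduct.map LinearMap.id d

lemma dtwo_tmul (d : Sy →ₗ[ℂ] Sy) (p q : Sy) : dtwo d (p ⊗ₜ q) = d p ⊗ₜ q + p ⊗ₜ d q := by
  simp [dtwo]

lemma dtwo_mul (d : Derivation ℂ Sy Sy) (x y : Sy ⊗[ℂ] Sy) :
    dtwo d.toLinearMap (x * y) = dtwo d.toLinearMap x * y + x * dtwo d.toLinearMap y := by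
  induction x using TensorProduct.induction_on with
  | zero => simp
  | add a b ha hb => simp only [add_mul, map_add, ha, hb]; ring
  | tmul p q =>
    induction y using TensorProduct.induction_on with
    | zero => simp
    | add a b ha hb => simp only [mul_add, map_add, ha, hb]; ring
    | tmul p' q' =>
      have e : ∀ a b : Sy, d.toLinearMap (a * b) = a * d.toLinearMap b + b * d.toLinearMap a := by
        intro a b; simpa using d.leibniz a b
      simp only [Algebra.TensorProduct.tmul_mul_tmul, dtwo_tmul, e, TensorProduct.add_tmul,
        TensorProduct.tmul_add, add_mul, mul_add]
      rw [mul_comm p' (d.toLinearMap p), mul_comm q' (d.toLinearMap q)]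
      abel

lemma dtwo_pow (d : Derivation ℂ Sy Sy) (x : Sy ⊗[ℂ] Sy) (hx : dtwo d.toLinearMap x = 0) (n : ℕ) :
    dtwo d.toLinearMap (x ^ n) = 0 := by
  induction n with
  | zero =>
    rw [pow_zero, Algebra.TensorProduct.one_def, dtwo_tmul]; simp
  | succ n ih => rw [pow_succ, dtwo_mul, ih, hx]; simp

lemma dtwo_cop (d : Derivation ℂ Sy Sy)
    (h : ∀ i, dtwo d.toLinearMap (cop (MvPolynomial.X i)) = cop (d (MvPolynomial.X i))) (p : Sy) :
    dtwo d.toLinearMap (cop p) = cop (d p) := by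
  induction p using MvPolynomial.induction_on with
  | C a =>
    have h1 : (MvPolynomial.C a : Sy) = a • 1 := by rw [MvPolynomial.smul_eq_C_mul, mul_one]
    rw [h1, map_smul, map_smul, map_one, Derivation.map_smul, Derivation.map_one_eq_zero,
      Algebra.TensorProduct.one_def, dtwo_tmul]
    simp
  | add p q hp hq => simp only [map_add, hp, hq]
  | mul_X p i hp =>
    rw [map_mul, dtwo_mul, hp, h, Derivation.leibniz]
    simp only [smul_eq_mul, map_add, map_mul]; ring

/-- first order operator `mult by u + d` -/
noncomputable def Lop (u : Sy) (d : Derivation ℂ Sy Sy) : Sy →ₗ[ℂ] Sy :=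
  LinearMap.mulLeft ℂ u + d.toLinearMap

lemma dtwo_Lop (u : Sy) (d : Derivation ℂ Sy Sy) (x : Sy ⊗[ℂ] Sy) :
    dtwo (Lop u d) x = (u ⊗ₜ 1 + 1 ⊗ₜ u) * x + dtwo d.toLinearMap x := by
  induction x using TensorProduct.induction_on with
  | zero => simp
  | add a b ha hb => simp only [mul_add, map_add, ha, hb]; abel
  | tmul p q =>
    simp only [dtwo_tmul, Lop, LinearMap.add_apply, LinearMap.mulLeft_apply, add_mul,
      Algebra.TensorProduct.tmul_mul_tmul, one_mul, TensorProduct.add_tmul, TensorProduct.tmul_add]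
    abel

lemma dtwo_key (u : Sy) (d : Derivation ℂ Sy Sy) (hu : cop u = u ⊗ₜ 1 + 1 ⊗ₜ u)
    (h : ∀ i, dtwo d.toLinearMap (cop (MvPolynomial.X i)) = cop (d (MvPolynomial.X i)))
    (hP : dtwo d.toLinearMap Poi = 0) (n : ℕ) (p : Sy) :
    dtwo (Lop u d) (cop p * Poi ^ n) = cop (Lop u d p) * Poi ^ n := by
  rw [dtwo_Lop, dtwo_mul, dtwo_pow d _ hP, dtwo_cop d h]
  simp only [Lop, LinearMap.add_apply, LinearMap.mulLeft_apply, map_add, map_mul, hu]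
  simp only [Derivation.coeFn_coe]
  ring

/-- derivation `a ∂_b` -/
noncomputable def dV : Derivation ℂ Sy Sy :=
  MvPolynomial.mkDerivation ℂ ![0, MvPolynomial.X 0]
/-- derivation `a ∂_a - b ∂_b` -/
noncomputable def dW : Derivation ℂ Sy Sy :=
  MvPolynomial.mkDerivation ℂ ![MvPolynomial.X 0, - MvPolynomial.X 1]

noncomputable def LV : Sy →ₗ[ℂ] Sy := Lop (MvPolynomial.X 0) dV
noncomputable def LW : Sy →ₗ[ℂ] Sy := Lop (- MvPolynomial.X 1) dW

lemma cop_X (i : Fin 2) : cop (MvPolynomial.X i) =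
    (MvPolynomial.X i : Sy) ⊗ₜ[ℂ] (1 : Sy) + (1 : Sy) ⊗ₜ[ℂ] MvPolynomial.X i := by
  simp [cop]

lemma dV0 : dV (MvPolynomial.X 0) = 0 := by simp [dV, MvPolynomial.mkDerivation_X]
lemma dV1 : dV (MvPolynomial.X 1) = MvPolynomial.X 0 := by simp [dV, MvPolynomial.mkDerivation_X]
lemma dW0 : dW (MvPolynomial.X 0) = MvPolynomial.X 0 := by simp [dW, MvPolynomial.mkDerivation_X]
lemma dW1 : dW (MvPolynomial.X 1) = - MvPolynomial.X 1 := by simp [dW, MvPolynomial.mkDerivation_X]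

lemma LV_key (n : ℕ) (p : Sy) : dtwo LV (cop p * Poi ^ n) = cop (LV p) * Poi ^ n := by
  apply dtwo_key
  · exact cop_X 0
  · intro i
    fin_cases i <;> simp [cop_X, dtwo_tmul, dV0, dV1]
  · simp [Poi, dtwo_tmul, dV0, dV1]

lemma LW_key (n : ℕ) (p : Sy) : dtwo LW (cop p * Poi ^ n) = cop (LW p) * Poi ^ n := by
  apply dtwo_key
  · rw [map_neg, cop_X, TensorProduct.neg_tmul, TensorProduct.tmul_neg]; abel
  · intro i
    fin_cases i <;> simp [cop_X, dtwo_tmul, dW0, dW1, TensorProduct.neg_tmul, TensorProduct.tmul_neg]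
    abel
  · simp [Poi, dtwo_tmul, dW0, dW1, TensorProduct.neg_tmul, TensorProduct.tmul_neg]

/-- the monomial `a^r b^s` -/
noncomputable def mon (r s : ℕ) : Sy := MvPolynomial.X 0 ^ r * MvPolynomial.X 1 ^ s

lemma dV_mon (r s : ℕ) : dV (mon r s) = (s : ℂ) • mon (r + 1) (s - 1) := by
  simp only [mon, Derivation.leibniz, Derivation.leibniz_pow, dV0, dV1, smul_eq_mul, nsmul_eq_mul,
    MvPolynomial.smul_eq_C_mul]
  simp; ring

lemma dW_mon (r s : ℕ) : dW (mon r s) = ((r : ℂ) - s) • mon r s := by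
  simp only [mon, Derivation.leibniz, Derivation.leibniz_pow, dW0, dW1, smul_eq_mul, nsmul_eq_mul,
    MvPolynomial.smul_eq_C_mul]
  rcases r with _ | r <;> rcases s with _ | s <;> simp <;> ring_nf <;> simp

lemma LV_mon (r s : ℕ) : LV (mon r s) = mon (r + 1) s + (s : ℂ) • mon (r + 1) (s - 1) := by
  rw [← dV_mon]; simp [LV, Lop, mon]; ring

lemma LW_mon (r s : ℕ) : LW (mon r s) = - mon r (s + 1) + ((r : ℂ) - s) • mon r s := by
  rw [← dW_mon]; simp [LW, Lop, mon]; ring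

lemma mon_ext {M : Type*} [AddCommGroup M] [Module ℂ M] {S T : Sy →ₗ[ℂ] M}
    (h : ∀ r s, S (mon r s) = T (mon r s)) : S = T := by
  apply (MvPolynomial.basisMonomials (Fin 2) ℂ).ext
  intro m
  have : (MvPolynomial.monomial m (1 : ℂ) : Sy) = mon (m 0) (m 1) := by
    rw [MvPolynomial.monomial_eq, Finsupp.prod_fintype _ _ (by simp)]
    simp [mon]
  simp only [MvPolynomial.coe_basisMonomials, this, h]

section
variable {R : Type*} [CommRing R] [Algebra ℂ R]

/-- `T` is a jet map -/
def IsJet (V W : Derivation ℂ R R) (T : Sy →ₗ[ℂ] R) : Prop :=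
  (∀ p, V (T p) = T (LV p)) ∧ (∀ p, W (T p) = T (LW p))

lemma IsJet.ext {V W : Derivation ℂ R R} {S T : Sy →ₗ[ℂ] R} (hS : IsJet V W S) (hT : IsJet V W T)
    (h : S 1 = T 1) : S = T := by
  apply mon_ext
  intro r
  induction r with
  | zero =>
    intro s
    induction s with
    | zero => simpa [mon] using h
    | succ s ih =>
      have e : mon 0 (s + 1) = - LW (mon 0 s) + (((0:ℕ) : ℂ) - s) • mon 0 s := by
        rw [LW_mon]; abel
      rw [e]; simp only [map_add, map_neg, map_smul, ← hS.2, ← hT.2, ih]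
  | succ r ihr =>
    intro s
    induction s with
    | zero =>
      have e : mon (r + 1) 0 = LV (mon r 0) := by rw [LV_mon]; simp
      rw [e, ← hS.1, ← hT.1, ihr]
    | succ s ih =>
      have e : mon (r + 1) (s + 1) = LV (mon r (s + 1)) - ((s + 1 : ℕ) : ℂ) • mon (r + 1) s := by
        rw [LV_mon]; simp
      rw [e]; simp only [map_sub, map_smul, ← hS.1, ← hT.1, ihr, ih]

/-- the jets -/
noncomputable def Dj (V W : Derivation ℂ R R) (r s : ℕ) : R →ₗ[ℂ] R :=
  (-1 : ℂ) ^ s • ((V.toLinearMap ^ r) ∘ₗ pochIter (W.toLinearMap + (r : ℂ) • LinearMap.id) s)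

lemma poch_comm (F : R →ₗ[ℂ] R) (s : ℕ) (f : R) : pochIter F s (F f) = F (pochIter F s f) := by
  induction s generalizing f with
  | zero => rfl
  | succ s ih =>
    simp only [pochIter, LinearMap.comp_apply, LinearMap.add_apply, LinearMap.smul_apply,
      LinearMap.id_apply, map_add, map_smul, ih]

lemma poch_left (F : R →ₗ[ℂ] R) (s : ℕ) :
    ∀ f, pochIter F (s + 1) f = pochIter (F + LinearMap.id) s (F f) := by
  induction s with
  | zero => intro f; simp [pochIter]
  | succ s ih =>
    intro f
    have h1 : pochIter F (s + 1 + 1) f = pochIter F (s + 1) (F f + ((s + 1 : ℕ) : ℂ) • f) := by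
      simp only [pochIter, LinearMap.comp_apply, LinearMap.add_apply, LinearMap.smul_apply,
        LinearMap.id_apply]
    rw [h1, ih]
    simp only [pochIter, LinearMap.comp_apply, LinearMap.add_apply, LinearMap.smul_apply,
        LinearMap.id_apply]
    congr 1
    simp only [map_add, map_smul]
    push_cast
    module

lemma poch_shift (F : R →ₗ[ℂ] R) (s : ℕ) (f : R) :
    pochIter F s f = pochIter (F + LinearMap.id) s f
      - (s : ℂ) • pochIter (F + LinearMap.id) (s - 1) f := by
  rcases s with _ | s
  · simp [pochIter]
  · rw [poch_left]
    simp only [pochIter, LinearMap.comp_apply, LinearMap.add_apply, LinearMap.smul_apply,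
        LinearMap.id_apply, map_add, map_smul, Nat.add_sub_cancel]
    push_cast
    module

lemma W_pow (V W : Derivation ℂ R R) (hcomm : ∀ f : R, W (V f) - V (W f) = (2 : ℂ) • V f)
    (r : ℕ) (f : R) : W ((V.toLinearMap ^ r) f) = (V.toLinearMap ^ r) (W f + (2 * r : ℂ) • f) := by
  induction r generalizing f with
  | zero => simp
  | succ r ih =>
    have h := hcomm f
    rw [sub_eq_iff_eq_add] at h
    simp only [pow_succ, Module.End.mul_apply, ih, map_add, map_smul]
    simp only [Derivation.coeFn_coe, h, map_add, map_smul]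
    push_cast
    module

lemma V_Dj (V W : Derivation ℂ R R) (r s : ℕ) (f : R) :
    V (Dj V W r s f) = Dj V W (r + 1) s f + (s : ℂ) • Dj V W (r + 1) (s - 1) f := by
  have e : W.toLinearMap + ((r + 1 : ℕ) : ℂ) • LinearMap.id
      = W.toLinearMap + (r : ℂ) • LinearMap.id + LinearMap.id := by
    push_cast; module
  have hV : ∀ x, V ((V.toLinearMap ^ r) x) = (V.toLinearMap ^ (r + 1)) x := by
    intro x; rw [pow_succ']; rfl
  simp only [Dj, LinearMap.smul_apply, LinearMap.comp_apply, e]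
  rw [Derivation.map_smul, hV, poch_shift _ s f, map_sub, map_smul]
  rcases s with _ | s
  · simp
  · simp only [Nat.add_sub_cancel, pow_succ]; module

lemma W_Dj (V W : Derivation ℂ R R) (hcomm : ∀ f : R, W (V f) - V (W f) = (2 : ℂ) • V f)
    (r s : ℕ) (f : R) :
    W (Dj V W r s f) = - Dj V W r (s + 1) f + ((r : ℂ) - s) • Dj V W r s f := by
  have hc := poch_comm (W.toLinearMap + (r : ℂ) • LinearMap.id) s f
  simp only [LinearMap.add_apply, LinearMap.smul_apply, LinearMap.id_apply, map_add, map_smul,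
    Derivation.coeFn_coe] at hc
  have hc' := add_right_cancel hc
  simp only [Dj, LinearMap.smul_apply, LinearMap.comp_apply, pochIter]
  rw [Derivation.map_smul, W_pow V W hcomm]
  simp only [LinearMap.add_apply, LinearMap.smul_apply, LinearMap.id_apply, map_add, map_smul,
    Derivation.coeFn_coe, pow_succ, hc']
  module

/-- jet map of `f` -/
noncomputable def Jet (V W : Derivation ℂ R R) (f : R) : Sy →ₗ[ℂ] R :=
  (MvPolynomial.basisMonomials (Fin 2) ℂ).constr ℂ (fun m => Dj V W (m 0) (m 1) f)

lemma Jet_mon (V W : Derivation ℂ R R) (f : R) (r s : ℕ) : Jet V W f (mon r s) = Dj V W r s f := by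
  have : mon r s = MvPolynomial.basisMonomials (Fin 2) ℂ
      (Finsupp.single 0 r + Finsupp.single 1 s) := by
    rw [MvPolynomial.coe_basisMonomials, mon, MvPolynomial.X_pow_eq_monomial,
      MvPolynomial.X_pow_eq_monomial, MvPolynomial.monomial_mul, one_mul]
  rw [this, Jet, Module.Basis.constr_basis]
  simp

lemma Jet_one (V W : Derivation ℂ R R) (f : R) : Jet V W f 1 = f := by
  have := Jet_mon V W f 0 0
  simpa [mon, Dj, pochIter] using this

lemma Jet_isJet (V W : Derivation ℂ R R) (hcomm : ∀ f : R, W (V f) - V (W f) = (2 : ℂ) • V f)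
    (f : R) : IsJet V W (Jet V W f) := by
  constructor
  · have : V.toLinearMap ∘ₗ Jet V W f = Jet V W f ∘ₗ LV := by
      apply mon_ext
      intro r s
      simp only [LinearMap.comp_apply, LV_mon, map_add, map_smul, Jet_mon]
      exact V_Dj V W r s f
    exact fun p => LinearMap.congr_fun this p
  · have : W.toLinearMap ∘ₗ Jet V W f = Jet V W f ∘ₗ LW := by
      apply mon_ext
      intro r s
      simp only [LinearMap.comp_apply, LW_mon, map_add, map_smul, map_neg, Jet_mon]
      exact W_Dj V W hcomm r s f
    exact fun p => LinearMap.congr_fun this p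

/-- product of two linear maps into `R` -/
noncomputable def pr {A B : Type*} [AddCommGroup A] [Module ℂ A] [AddCommGroup B] [Module ℂ B]
    (S : A →ₗ[ℂ] R) (T : B →ₗ[ℂ] R) : A ⊗[ℂ] B →ₗ[ℂ] R :=
  LinearMap.mul' ℂ R ∘ₗ TensorProduct.map S T

lemma pr_tmul {A B : Type*} [AddCommGroup A] [Module ℂ A] [AddCommGroup B] [Module ℂ B]
    (S : A →ₗ[ℂ] R) (T : B →ₗ[ℂ] R) (a : A) (b : B) : pr S T (a ⊗ₜ b) = S a * T b := by
  simp [pr]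

lemma pr_der (D : Derivation ℂ R R) (L : Sy →ₗ[ℂ] Sy) (S T : Sy →ₗ[ℂ] R)
    (hS : ∀ p, D (S p) = S (L p)) (hT : ∀ p, D (T p) = T (L p)) (x : Sy ⊗[ℂ] Sy) :
    D (pr S T x) = pr S T (dtwo L x) := by
  induction x using TensorProduct.induction_on with
  | zero => simp
  | add a b ha hb => simp only [map_add, ha, hb]
  | tmul p q =>
    simp only [dtwo_tmul, pr_tmul, map_add, Derivation.leibniz, hS, hT, smul_eq_mul]
    ring

/-- star component -/
noncomputable def st (V W : Derivation ℂ R R) (n : ℕ) (f g : R) : R :=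
  ((n.factorial : ℂ)⁻¹) • pr (Jet V W f) (Jet V W g) (Poi ^ n)

lemma Jet_st (V W : Derivation ℂ R R) (hcomm : ∀ f : R, W (V f) - V (W f) = (2 : ℂ) • V f)
    (n : ℕ) (f g : R) (p : Sy) :
    Jet V W (st V W n f g) p =
      ((n.factorial : ℂ)⁻¹) • pr (Jet V W f) (Jet V W g) (cop p * Poi ^ n) := by
  have hf := Jet_isJet V W hcomm f
  have hg := Jet_isJet V W hcomm g
  let T : Sy →ₗ[ℂ] R := ((n.factorial : ℂ)⁻¹) •
    (pr (Jet V W f) (Jet V W g) ∘ₗ LinearMap.mulRight ℂ (Poi ^ n) ∘ₗ cop.toLinearMap)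
  have hTa : ∀ p, T p = ((n.factorial : ℂ)⁻¹) •
      pr (Jet V W f) (Jet V W g) (cop p * Poi ^ n) := fun p => rfl
  have hT : IsJet V W T := by
    constructor
    · intro p
      rw [hTa, hTa, Derivation.map_smul, pr_der V LV _ _ hf.1 hg.1, LV_key]
    · intro p
      rw [hTa, hTa, Derivation.map_smul, pr_der W LW _ _ hf.2 hg.2, LW_key]
  have h1 : Jet V W (st V W n f g) = T := by
    apply IsJet.ext (Jet_isJet V W hcomm _) hT
    rw [Jet_one, hTa, map_one, one_mul, st]
  rw [h1, hTa]

lemma smul_aux {B : Type*} [CommRing B] [Algebra ℂ B] (u v : B) (k c : ℕ) :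
    u * ((-1) ^ k * v) * (c : B) = ((-1 : ℂ) ^ k * (c : ℂ)) • (u * v) := by
  rw [Algebra.smul_def, map_mul, map_pow, map_neg, map_one, map_natCast]
  ring

lemma st_eq (V W : Derivation ℂ R R) (n : ℕ) (f g : R) :
    st V W n f g = ∑ r ∈ range (n + 1),
      ((-1 : ℂ) ^ r / ((r.factorial : ℂ) * ((n - r).factorial : ℂ))) •
        (((V.toLinearMap ^ r)
            (pochIter (W.toLinearMap + (r : ℂ) • LinearMap.id) (n - r) f)) *
         ((V.toLinearMap ^ (n - r))
            (pochIter (W.toLinearMap + ((n - r : ℕ) : ℂ) • LinearMap.id) r g))) := by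
  rw [st, Poi, sub_eq_add_neg, add_pow, map_sum, Finset.smul_sum]
  refine Finset.sum_congr rfl fun r hr => ?_
  have hr' : r ≤ n := by simpa [Nat.lt_succ_iff] using hr
  have e : ((MvPolynomial.X 0 : Sy) ⊗ₜ[ℂ] (MvPolynomial.X 1 : Sy)) ^ r *
      (-((MvPolynomial.X 1 : Sy) ⊗ₜ[ℂ] (MvPolynomial.X 0 : Sy))) ^ (n - r) * (n.choose r : Sy ⊗[ℂ] Sy)
      = ((-1 : ℂ) ^ (n - r) * (n.choose r : ℂ)) • (mon r (n - r) ⊗ₜ[ℂ] mon (n - r) r) := by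
    rw [neg_pow ((MvPolynomial.X 1 : Sy) ⊗ₜ[ℂ] (MvPolynomial.X 0 : Sy)), Algebra.TensorProduct.tmul_pow, Algebra.TensorProduct.tmul_pow]
    have : mon r (n - r) ⊗ₜ[ℂ] mon (n - r) r = (((MvPolynomial.X 0 : Sy) ^ r) ⊗ₜ[ℂ] ((MvPolynomial.X 1 : Sy) ^ r))
       * (((MvPolynomial.X 1 : Sy) ^ (n - r)) ⊗ₜ[ℂ] ((MvPolynomial.X 0 : Sy) ^ (n - r))) := by
      rw [Algebra.TensorProduct.tmul_mul_tmul, mon, mon, mul_comm (MvPolynomial.X 1 ^ r)]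
    rw [this]
    exact smul_aux _ _ _ _
  rw [e, map_smul, pr_tmul, Jet_mon, Jet_mon]
  simp only [Dj, LinearMap.smul_apply, LinearMap.comp_apply, smul_mul_smul_comm, smul_smul]
  congr 1
  rw [Nat.cast_choose ℂ hr']
  have h1 : (n.factorial : ℂ) ≠ 0 := by exact_mod_cast n.factorial_ne_zero
  have h2 : (r.factorial : ℂ) ≠ 0 := by exact_mod_cast r.factorial_ne_zero
  have h3 : ((n - r).factorial : ℂ) ≠ 0 := by exact_mod_cast (n - r).factorial_ne_zero
  have h4 : (-1 : ℂ) ^ (n - r) * (-1 : ℂ) ^ (n - r) = 1 := by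
    rw [← mul_pow]; simp
  field_simp
  linear_combination h4

lemma binom_sum {B : Type*} [CommRing B] [Algebra ℂ B] (T : B →ₗ[ℂ] R) (x y : B) (n : ℕ) :
    ∑ r ∈ range (n + 1), (((n - r).factorial : ℂ)⁻¹ * (r.factorial : ℂ)⁻¹) • T (y ^ (n - r) * x ^ r)
      = (n.factorial : ℂ)⁻¹ • T ((x + y) ^ n) := by
  rw [add_pow, map_sum, Finset.smul_sum]
  refine Finset.sum_congr rfl fun r hr => ?_
  have hr' : r ≤ n := by simpa [Nat.lt_succ_iff] using hr
  have e : x ^ r * y ^ (n - r) * (n.choose r : B) = (n.choose r : ℂ) • (y ^ (n - r) * x ^ r) := by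
    rw [Algebra.smul_def, map_natCast]; ring
  rw [e, map_smul, smul_smul]
  congr 1
  rw [Nat.cast_choose ℂ hr']
  have h1 : (n.factorial : ℂ) ≠ 0 := by exact_mod_cast n.factorial_ne_zero
  field_simp


lemma pr_asc {A : Type*} [CommRing A] [Algebra ℂ A] (F G H : A →ₗ[ℂ] R) (x : (A ⊗[ℂ] A) ⊗[ℂ] A) :
    pr (pr F G) H x = pr F (pr G H) (Algebra.TensorProduct.assoc ℂ ℂ ℂ A A A x) := by
  induction x using TensorProduct.induction_on with
  | zero => simp
  | add a b ha hb => simp only [map_add, ha, hb]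
  | tmul p q =>
    induction p using TensorProduct.induction_on with
    | zero => simp
    | add a b ha hb => simp only [map_add, TensorProduct.add_tmul, ha, hb]
    | tmul p r => simp only [Algebra.TensorProduct.assoc_tmul, pr_tmul]; ring

lemma assoc_abs {A : Type*} [CommRing A] [Algebra ℂ A] (c : A →ₐ[ℂ] A ⊗[ℂ] A) (x y : A)
    (hx : c x = x ⊗ₜ 1 + 1 ⊗ₜ x) (hy : c y = y ⊗ₜ 1 + 1 ⊗ₜ y) (P : A ⊗[ℂ] A)
    (hP : P = x ⊗ₜ y - y ⊗ₜ x) (F G H : A →ₗ[ℂ] R) (FG GH : ℕ → A →ₗ[ℂ] R)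
    (hFG : ∀ n p, FG n p = ((n.factorial : ℂ)⁻¹) • pr F G (c p * P ^ n))
    (hGH : ∀ n p, GH n p = ((n.factorial : ℂ)⁻¹) • pr G H (c p * P ^ n)) (n : ℕ) :
    ∑ r ∈ range (n + 1), (((n - r).factorial : ℂ)⁻¹) • pr (FG r) H (P ^ (n - r)) =
    ∑ r ∈ range (n + 1), (((n - r).factorial : ℂ)⁻¹) • pr F (GH r) (P ^ (n - r)) := by
  let Pa : A ⊗[ℂ] (A ⊗[ℂ] A) := x ⊗ₜ (y ⊗ₜ 1) - y ⊗ₜ (x ⊗ₜ 1)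
  let Pb : A ⊗[ℂ] (A ⊗[ℂ] A) := x ⊗ₜ (1 ⊗ₜ y) - y ⊗ₜ (1 ⊗ₜ x)
  let Pc : A ⊗[ℂ] (A ⊗[ℂ] A) := 1 ⊗ₜ P
  let asc := Algebra.TensorProduct.assoc ℂ ℂ ℂ A A A
  let lam := Algebra.TensorProduct.map c (AlgHom.id ℂ A)
  let rho := Algebra.TensorProduct.map (AlgHom.id ℂ A) c
  have asc_P : asc (P ⊗ₜ 1) = Pa := by
    simp only [asc, hP, TensorProduct.sub_tmul, map_sub, Algebra.TensorProduct.assoc_tmul, Pa]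
  have lam_P : asc (lam P) = Pb + Pc := by
    simp only [asc, lam, hP, map_sub, Algebra.TensorProduct.map_tmul, hx, hy,
      AlgHom.id_apply, TensorProduct.add_tmul, map_add, Algebra.TensorProduct.assoc_tmul, Pb, Pc,
      TensorProduct.tmul_sub]
    abel
  have rho_P : rho P = Pa + Pb := by
    simp only [rho, hP, map_sub, Algebra.TensorProduct.map_tmul, hx, hy,
      AlgHom.id_apply, TensorProduct.tmul_add, Pa, Pb]
    abel
  have key : ∀ n (z : A ⊗[ℂ] A), pr (FG n) H z =
      (n.factorial : ℂ)⁻¹ • pr (pr F G) H (lam z * (P ⊗ₜ 1) ^ n) := by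
    intro n z
    induction z using TensorProduct.induction_on with
    | zero => simp
    | add a b ha hb => simp only [map_add, ha, hb, add_mul, smul_add]
    | tmul p q =>
      simp only [lam]
      rw [pr_tmul, hFG, Algebra.TensorProduct.map_tmul, Algebra.TensorProduct.tmul_pow,
        Algebra.TensorProduct.tmul_mul_tmul, pr_tmul, one_pow, mul_one, smul_mul_assoc]
      rfl
  have key2 : ∀ n (z : A ⊗[ℂ] A), pr F (GH n) z =
      (n.factorial : ℂ)⁻¹ • pr F (pr G H) (rho z * Pc ^ n) := by
    intro n z
    induction z using TensorProduct.induction_on with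
    | zero => simp
    | add a b ha hb => simp only [map_add, ha, hb, add_mul, smul_add]
    | tmul p q =>
      simp only [rho, Pc]
      rw [pr_tmul, hGH, Algebra.TensorProduct.map_tmul, Algebra.TensorProduct.tmul_pow,
        Algebra.TensorProduct.tmul_mul_tmul, pr_tmul, one_pow, mul_one, mul_smul_comm]
      rfl
  have left : ∀ r, pr (FG r) H (P ^ (n - r)) =
      (r.factorial : ℂ)⁻¹ • pr F (pr G H) ((Pb + Pc) ^ (n - r) * Pa ^ r) := by
    intro r
    rw [key, pr_asc, ← lam_P, ← asc_P, map_pow lam, map_mul, map_pow, map_pow]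
  have right : ∀ r, pr F (GH r) (P ^ (n - r)) =
      (r.factorial : ℂ)⁻¹ • pr F (pr G H) ((Pa + Pb) ^ (n - r) * Pc ^ r) := by
    intro r
    rw [key2, ← rho_P, map_pow]
  simp only [left, right, smul_smul]
  refine (binom_sum (pr F (pr G H)) Pa (Pb + Pc) n).trans
    (Eq.trans ?_ (binom_sum (pr F (pr G H)) Pc (Pa + Pb) n).symm)
  rw [add_comm Pc, add_assoc]

end

end CM

/-- Connes–Moscovici: if `V`, `W` are derivations of a commutative
`ℂ`-algebra `R` with `W∘V − V∘W = 2V`, then the brackets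
`χ_n(f,g) = Σ_{r=0}^n ((−1)^r/(r!(n−r)!)) (V^r∘(W+r·Id)^{<n−r>})(f) · (V^{n−r}∘(W+(n−r)·Id)^{<r>})(g)`
form a formal deformation of `R`: `χ_0` is the product and the star product is
associative (equivalently, the associativity identities hold). -/
theorem stmt8 (R : Type*) [CommRing R] [Algebra ℂ R]
    (V W : Derivation ℂ R R)
    (hcomm : ∀ f : R, W (V f) - V (W f) = (2 : ℂ) • V f)
    (χ : ℕ → R → R → R)
    (hχ : ∀ (n : ℕ) (f g : R), χ n f g = ∑ r ∈ range (n + 1),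
      ((-1 : ℂ) ^ r / ((r.factorial : ℂ) * ((n - r).factorial : ℂ))) •
        (((V.toLinearMap ^ r)
            (pochIter (W.toLinearMap + (r : ℂ) • LinearMap.id) (n - r) f)) *
         ((V.toLinearMap ^ (n - r))
            (pochIter (W.toLinearMap + ((n - r : ℕ) : ℂ) • LinearMap.id) r g)))) :
    (∀ f g : R, χ 0 f g = f * g) ∧
    (∀ (n : ℕ) (f g h : R),
      ∑ r ∈ range (n + 1), χ (n - r) (χ r f g) h
        = ∑ r ∈ range (n + 1), χ (n - r) f (χ r g h)) := by
  have hst : ∀ n f g, χ n f g = CM.st V W n f g := fun n f g => by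
    rw [hχ, CM.st_eq]
  refine ⟨fun f g => by simp [hχ, pochIter], fun n f g h => ?_⟩
  simp only [hst]
  exact CM.assoc_abs CM.cop _ _ (CM.cop_X 0) (CM.cop_X 1) CM.Poi rfl (CM.Jet V W f) (CM.Jet V W g)
    (CM.Jet V W h) (fun r => CM.Jet V W (CM.st V W r f g)) (fun r => CM.Jet V W (CM.st V W r g h))
    (fun r p => CM.Jet_st V W hcomm r f g p) (fun r p => CM.Jet_st V W hcomm r g h p) n
end

section
/- Let J = C[E4, E6, A, B] be the bigraded polynomial algebra with (weight, index) of E4, E6, A, B equal to (4,0), (6,0), (−2,1), (0,1). For (a,b) ∈ C², let S_{a,b} be the derivation with S_{a,b}(E4) = −E6/3, S_{a,b}(E6) = −E4²/2, S_{a,b}(A) = aB, S_{a,b}(B) = bE4A. For c ∈ C and n ≥ 0 define {f,g}_n^{[a,b,c]} = Σ_{r=0}^n (−1)^r C(k+cp+n−1, n−r) C(ℓ+cq+n−1, r) S_{a,b}^r(f) S_{a,b}^{n−r}(g) for f of weight k and index p, g of weight ℓ and index q. Then ({·,·}_n^{[a,b,c]})_{n≥0} is a formal deformation of J, and {J_{k,p},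 J_{ℓ,q}}_n^{[a,b,c]} ⊆ J_{k+ℓ+2n, p+q}. -/
open Finset MvPolynomial

/-- The generalized binomial coefficient `C(x,m) = x(x−1)⋯(x−m+1)/m!`. -/
noncomputable def genBinom (x : ℂ) (m : ℕ) : ℂ :=
  (∏ i ∈ range m, (x - (i : ℂ))) / (m.factorial : ℂ)

/-- The (weight, index) bigrading of `J = ℂ[E4,E6,A,B]`:
`E4 ↦ (4,0)`, `E6 ↦ (6,0)`, `A ↦ (−2,1)`, `B ↦ (0,1)`. -/
def jacWt : Fin 4 → ℤ × ℤ := ![(4, 0), (6, 0), (-2, 1), (0, 1)]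

set_option linter.unusedSimpArgs false
open scoped TensorProduct

namespace RC
set_option synthInstance.maxHeartbeats 200000
noncomputable section

/-- symbols -/
abbrev P := MvPolynomial (Fin 2) ℂ

section gen
variable {J : Type*} [CommRing J] [Algebra ℂ J] (S E : Derivation ℂ J J)

/-- jets -/
def phi (a : ℕ) : ℕ → (J →ₗ[ℂ] J)
  | 0 => S.toLinearMap ^ a
  | b + 1 => -((E.toLinearMap + ((b : ℂ) - (a : ℂ)) • LinearMap.id) ∘ₗ phi a b)

lemma phi_zero_apply (a : ℕ) (f : J) : phi S E a 0 f = (S.toLinearMap ^ a) f := rfl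

lemma phi_succ_apply (a b : ℕ) (f : J) :
    phi S E a (b + 1) f = -(E (phi S E a b f) + ((b : ℂ) - (a : ℂ)) • phi S E a b f) := rfl

lemma phi_S (hES : ∀ f, E (S f) = S (E f) + (2 : ℂ) • S f) (a b : ℕ) (f : J) :
    S (phi S E a b f) = phi S E (a + 1) b f + (b : ℂ) • phi S E (a + 1) (b - 1) f := by
  induction b with
  | zero =>
    simp only [phi_zero_apply, pow_succ', Module.End.mul_apply]
    simp
  | succ b ih =>
    rw [phi_succ_apply, map_neg, map_add, Derivation.map_smul]
    have h1 : S (E (phi S E a b f)) = E (S (phi S E a b f)) - (2 : ℂ) • S (phi S E a b f) := by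
      rw [hES]; abel
    rw [h1, ih, phi_succ_apply]
    cases b with
    | zero => simp; module
    | succ b =>
      simp only [Nat.add_sub_cancel, map_add, Derivation.map_smul]
      rw [phi_succ_apply S E (a+1) b]
      push_cast
      simp only [map_neg, map_add, Derivation.map_smul]
      module

/-- symbol map -/
def sym (f : J) : P →ₗ[ℂ] J :=
  (MvPolynomial.basisMonomials (Fin 2) ℂ).constr ℂ (fun s => phi S E (s 0) (s 1) f)

lemma mono_eq (a b : ℕ) : (X 0 ^ a * X 1 ^ b : P) =
    monomial (Finsupp.single 0 a + Finsupp.single 1 b) 1 := by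
  rw [X_pow_eq_monomial, X_pow_eq_monomial, monomial_mul, one_mul]

lemma sym_mono (f : J) (a b : ℕ) : sym S E f (X 0 ^ a * X 1 ^ b) = phi S E a b f := by
  have h := (MvPolynomial.basisMonomials (Fin 2) ℂ).constr_basis ℂ
    (fun s => phi S E (s 0) (s 1) f) (Finsupp.single 0 a + Finsupp.single 1 b)
  rw [MvPolynomial.coe_basisMonomials] at h
  rw [mono_eq]
  refine Eq.trans h ?_
  simp

lemma P_ext {V : Type*} [AddCommGroup V] [Module ℂ V] {u v : P →ₗ[ℂ] V}
    (h : ∀ a b : ℕ, u (X 0 ^ a * X 1 ^ b) = v (X 0 ^ a * X 1 ^ b)) : u = v := by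
  refine (MvPolynomial.basisMonomials (Fin 2) ℂ).ext fun s => ?_
  have : s = Finsupp.single 0 (s 0) + Finsupp.single 1 (s 1) := by
    ext i; fin_cases i <;> simp
  rw [MvPolynomial.coe_basisMonomials, this]
  have := h (s 0) (s 1)
  rwa [mono_eq] at this

/-- degree derivation -/
def dl : Derivation ℂ P P := mkDerivation ℂ ![-X 0, X 1]
/-- shear derivation -/
def sh : Derivation ℂ P P := mkDerivation ℂ ![0, X 0]

@[simp] lemma dl0 : dl (X 0) = -X 0 := by simp [dl, mkDerivation_X]
@[simp] lemma dl1 : dl (X 1) = X 1 := by simp [dl, mkDerivation_X]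
@[simp] lemma sh0 : sh (X 0) = 0 := by simp [sh, mkDerivation_X]
@[simp] lemma sh1 : sh (X 1) = X 0 := by simp [sh, mkDerivation_X]

lemma dl_pow0 (a : ℕ) : dl (X 0 ^ a) = (-(a : ℂ)) • X 0 ^ a := by
  induction a with
  | zero => simp
  | succ n ih =>
    rw [pow_succ, Derivation.leibniz, ih, dl0]
    simp only [smul_eq_mul, MvPolynomial.smul_eq_C_mul]; push_cast
    simp only [map_neg, map_add, map_one]; ring

lemma dl_pow1 (a : ℕ) : dl (X 1 ^ a) = (a : ℂ) • X 1 ^ a := by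
  induction a with
  | zero => simp
  | succ n ih =>
    rw [pow_succ, Derivation.leibniz, ih, dl1]
    simp only [smul_eq_mul, MvPolynomial.smul_eq_C_mul]; push_cast
    simp only [map_add, map_one]; ring

lemma dl_mono (a b : ℕ) : dl (X 0 ^ a * X 1 ^ b) = ((b : ℂ) - a) • (X 0 ^ a * X 1 ^ b : P) := by
  rw [Derivation.leibniz, dl_pow0, dl_pow1]
  simp only [smul_eq_mul, MvPolynomial.smul_eq_C_mul, map_neg, map_sub]; ring

lemma sh_mono (a b : ℕ) : sh (X 0 ^ a * X 1 ^ b) =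
    (b : ℂ) • (X 0 ^ (a + 1) * X 1 ^ (b - 1) : P) := by
  rw [Derivation.leibniz, Derivation.leibniz_pow, Derivation.leibniz_pow, sh0, sh1]
  simp only [smul_eq_mul, MvPolynomial.smul_eq_C_mul, map_natCast, nsmul_eq_mul]; ring

lemma sym_q (f : J) (m : P) : sym S E f (X 1 * m) = -(E (sym S E f m) + sym S E f (dl m)) := by
  have : (sym S E f) ∘ₗ LinearMap.mulLeft ℂ (X 1 : P) =
      -(E.toLinearMap ∘ₗ sym S E f + sym S E f ∘ₗ dl.toLinearMap) := by
    apply P_ext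
    intro a b
    simp only [LinearMap.comp_apply, LinearMap.mulLeft_apply, LinearMap.neg_apply,
      LinearMap.add_apply, Derivation.coeFn_coe, dl_mono, map_smul]
    rw [show (X 1 * (X 0 ^ a * X 1 ^ b) : P) = X 0 ^ a * X 1 ^ (b + 1) by ring]
    simp only [sym_mono, phi_succ_apply]
  exact LinearMap.congr_fun this m

lemma sym_p (hES : ∀ f, E (S f) = S (E f) + (2 : ℂ) • S f) (f : J) (m : P) :
    S (sym S E f m) = sym S E f (X 0 * m) + sym S E f (sh m) := by
  have : S.toLinearMap ∘ₗ (sym S E f) = sym S E f ∘ₗ LinearMap.mulLeft ℂ (X 0 : P) +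
      sym S E f ∘ₗ sh.toLinearMap := by
    apply P_ext
    intro a b
    simp only [LinearMap.comp_apply, LinearMap.mulLeft_apply, 
      LinearMap.add_apply, Derivation.coeFn_coe, sh_mono, map_smul]
    rw [show (X 0 * (X 0 ^ a * X 1 ^ b) : P) = X 0 ^ (a + 1) * X 1 ^ b by ring]
    simp only [sym_mono, phi_S S E hES]
  exact LinearMap.congr_fun this m

/-- two-variable symbol map -/
def sym2 (f g : J) : P ⊗[ℂ] P →ₗ[ℂ] J :=
  LinearMap.mul' ℂ J ∘ₗ TensorProduct.map (sym S E f) (sym S E g)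

@[simp] lemma sym2_tmul (f g : J) (x y : P) :
    sym2 S E f g (x ⊗ₜ y) = sym S E f x * sym S E g y := by simp [sym2]

/-- symplectic form -/
def om : P ⊗[ℂ] P := (X 0) ⊗ₜ (X 1) - (X 1) ⊗ₜ (X 0)
/-- coproduct -/
def Dlt : P →ₐ[ℂ] P ⊗[ℂ] P := aeval (fun i => (X i) ⊗ₜ 1 + 1 ⊗ₜ (X i))
@[simp] lemma Dlt_X (i : Fin 2) : Dlt (X i) = (X i) ⊗ₜ 1 + 1 ⊗ₜ (X i) := by simp [Dlt]

/-- extension of an operator -/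
def ext2 (d : Derivation ℂ P P) : P ⊗[ℂ] P →ₗ[ℂ] P ⊗[ℂ] P :=
  TensorProduct.map d.toLinearMap LinearMap.id + TensorProduct.map LinearMap.id d.toLinearMap
@[simp] lemma ext2_tmul (d : Derivation ℂ P P) (x y : P) :
    ext2 d (x ⊗ₜ y) = (d x) ⊗ₜ y + x ⊗ₜ (d y) := by simp [ext2]

lemma ext2_mul (d : Derivation ℂ P P) (s t : P ⊗[ℂ] P) :
    ext2 d (s * t) = ext2 d s * t + s * ext2 d t := by
  induction s with
  | zero => simp
  | add s s' h h' => simp only [add_mul, map_add, h, h']; abel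
  | tmul x y =>
    induction t with
    | zero => simp
    | add s s' h h' => simp only [mul_add, map_add, h, h']; abel
    | tmul z w =>
      simp only [Algebra.TensorProduct.tmul_mul_tmul, ext2_tmul, Derivation.leibniz, smul_eq_mul,
        TensorProduct.tmul_add, TensorProduct.add_tmul, add_mul, mul_add]
      rw [mul_comm z, mul_comm w]
      abel

lemma sym2_q (f g : J) (s : P ⊗[ℂ] P) : sym2 S E f g (Dlt (X 1) * s) =
    -(E (sym2 S E f g s) + sym2 S E f g (ext2 dl s)) := by
  induction s with
  | zero => simp
  | add s s' h h' => simp only [mul_add, map_add, h, h']; abel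
  | tmul x y =>
    simp only [Dlt_X, add_mul, Algebra.TensorProduct.tmul_mul_tmul, map_add, one_mul, sym2_tmul,
      ext2_tmul, sym_q, Derivation.leibniz, smul_eq_mul]
    ring

lemma sym2_p (hES : ∀ f, E (S f) = S (E f) + (2 : ℂ) • S f) (f g : J) (s : P ⊗[ℂ] P) :
    S (sym2 S E f g s) = sym2 S E f g (Dlt (X 0) * s) + sym2 S E f g (ext2 sh s) := by
  induction s with
  | zero => simp
  | add s s' h h' => simp only [mul_add, map_add, h, h']; abel
  | tmul x y =>
    simp only [Dlt_X, add_mul, Algebra.TensorProduct.tmul_mul_tmul, map_add, one_mul, sym2_tmul,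
      ext2_tmul, sym_p S E hES, Derivation.leibniz, smul_eq_mul]
    ring

lemma ext2_one (d : Derivation ℂ P P) : ext2 d 1 = 0 := by
  rw [Algebra.TensorProduct.one_def]; simp

lemma ext2_pow_zero (d : Derivation ℂ P P) (s : P ⊗[ℂ] P) (h : ext2 d s = 0) (n : ℕ) :
    ext2 d (s ^ n) = 0 := by
  induction n with
  | zero => simp [ext2_one]
  | succ n ih => rw [pow_succ, ext2_mul, ih, h]; simp

lemma sh_om : ext2 sh om = 0 := by simp [om]
lemma dl_om : ext2 dl om = 0 := by simp [om, TensorProduct.neg_tmul, TensorProduct.tmul_neg]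
lemma sh_D0 : ext2 sh (Dlt (X 0)) = 0 := by simp
lemma dl_D (m : P) : ext2 dl (Dlt m) = Dlt (dl m) := by
  induction m using MvPolynomial.induction_on with
  | C r => 
    rw [← algebraMap_eq, AlgHom.commutes, Derivation.map_algebraMap, Algebra.algebraMap_eq_smul_one,
      map_smul, ext2_one]; simp
  | add p q hp hq => simp only [map_add, hp, hq]
  | mul_X p i h =>
    have : ext2 dl (Dlt (X i)) = Dlt (dl (X i)) := by
      fin_cases i
      · simp [TensorProduct.neg_tmul, TensorProduct.tmul_neg]; abel
      · simp
    rw [map_mul, ext2_mul, h, this, Derivation.leibniz]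
    simp only [smul_eq_mul, map_add, map_mul]; ring

lemma key (hES : ∀ f, E (S f) = S (E f) + (2 : ℂ) • S f) (f g : J) (n : ℕ) (m : P) :
    sym S E (sym2 S E f g (om ^ n)) m = sym2 S E f g (Dlt m * om ^ n) := by
  have : sym S E (sym2 S E f g (om ^ n)) =
      sym2 S E f g ∘ₗ LinearMap.mulRight ℂ (om ^ n) ∘ₗ Dlt.toLinearMap := by
    apply P_ext
    intro a b
    simp only [LinearMap.comp_apply, LinearMap.mulRight_apply, AlgHom.toLinearMap_apply, sym_mono]
    induction b with
    | zero =>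
      rw [phi_zero_apply, pow_zero, mul_one]
      induction a with
      | zero => simp
      | succ a ih =>
        rw [pow_succ', Module.End.mul_apply, ih, 
          Derivation.coeFn_coe, sym2_p S E hES, ext2_mul, map_pow, ext2_pow_zero _ _ sh_D0,
          ext2_pow_zero _ _ sh_om, pow_succ', map_mul Dlt, map_pow]
        simp [mul_assoc]
    | succ b ih =>
      rw [phi_succ_apply, ih, show (X 0 ^ a * X 1 ^ (b + 1) : P) = X 1 * (X 0 ^ a * X 1 ^ b) by ring,
        map_mul Dlt (X 1), mul_assoc, sym2_q, ext2_mul, ext2_pow_zero _ _ dl_om, dl_D, dl_mono]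
      simp only [map_smul, mul_zero, add_zero, smul_mul_assoc]
  exact LinearMap.congr_fun this m

lemma sym_add (f f' : J) : sym S E (f + f') = sym S E f + sym S E f' := by
  apply P_ext; intro a b; simp [sym_mono]
lemma sym_smul (r : ℂ) (f : J) : sym S E (r • f) = r • sym S E f := by
  apply P_ext; intro a b; simp [sym_mono]

lemma sym2_smul_left (r : ℂ) (f g : J) : sym2 S E (r • f) g = r • sym2 S E f g := by
  simp [sym2, sym_smul, TensorProduct.map_smul_left, LinearMap.comp_smul]
lemma sym2_smul_right (r : ℂ) (f g : J) : sym2 S E f (r • g) = r • sym2 S E f g := by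
  simp [sym2, sym_smul, TensorProduct.map_smul_right, LinearMap.comp_smul]

/-- the brackets -/
def mu (n : ℕ) : J →ₗ[ℂ] J →ₗ[ℂ] J :=
  LinearMap.mk₂ ℂ (fun f g => ((n.factorial : ℂ)⁻¹) • sym2 S E f g (om ^ n))
    (fun f f' g => by simp [sym2, sym_add, TensorProduct.map_add_left])
    (fun r f g => by rw [sym2_smul_left, LinearMap.smul_apply, smul_comm])
    (fun f g g' => by simp [sym2, sym_add, TensorProduct.map_add_right])
    (fun r f g => by rw [sym2_smul_right, LinearMap.smul_apply, smul_comm])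

lemma mu_apply (n : ℕ) (f g : J) :
    mu S E n f g = ((n.factorial : ℂ)⁻¹) • sym2 S E f g (om ^ n) := rfl

lemma mu_zero (f g : J) : mu S E 0 f g = f * g := by
  have h : ∀ f : J, sym S E f 1 = f := fun f => by
    have := sym_mono S E f 0 0
    simpa [phi_zero_apply] using this
  rw [mu_apply, pow_zero, Algebra.TensorProduct.one_def, sym2_tmul, h, h]; simp

/-- three-variable symbol map -/
def sym3 (f g h : J) : (P ⊗[ℂ] P) ⊗[ℂ] P →ₗ[ℂ] J :=
  LinearMap.mul' ℂ J ∘ₗ TensorProduct.map (sym2 S E f g) (sym S E h)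

@[simp] lemma sym3_tmul (f g h : J) (s : P ⊗[ℂ] P) (y : P) :
    sym3 S E f g h (s ⊗ₜ y) = sym2 S E f g s * sym S E h y := by simp [sym3]

/-- left extension of coproduct -/
def DL : P ⊗[ℂ] P →ₐ[ℂ] (P ⊗[ℂ] P) ⊗[ℂ] P := Algebra.TensorProduct.map Dlt (AlgHom.id ℂ P)
/-- right extension of coproduct -/
def DR : P ⊗[ℂ] P →ₐ[ℂ] P ⊗[ℂ] (P ⊗[ℂ] P) := Algebra.TensorProduct.map (AlgHom.id ℂ P) Dlt
/-- associator -/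
def asc : P ⊗[ℂ] (P ⊗[ℂ] P) →ₐ[ℂ] (P ⊗[ℂ] P) ⊗[ℂ] P :=
  (Algebra.TensorProduct.assoc ℂ ℂ ℂ P P P).symm.toAlgHom
@[simp] lemma asc_tmul (x y z : P) : asc (x ⊗ₜ (y ⊗ₜ z)) = (x ⊗ₜ y) ⊗ₜ z := by simp [asc]

section aux
variable {A A' : Type*} [Semiring A] [Algebra ℂ A] [Semiring A'] [Algebra ℂ A']
lemma aux_add (L : A →ₗ[ℂ] J) (D : A' →ₐ[ℂ] A) (c : A) (s s' : A') :
    L (D (s + s') * c) = L (D s * c) + L (D s' * c) := by rw [map_add, add_mul, map_add]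
lemma aux_zero (L : A →ₗ[ℂ] J) (D : A' →ₐ[ℂ] A) (c : A) : L (D 0 * c) = 0 := by
  rw [map_zero, zero_mul, map_zero]
end aux

lemma left3 (hES : ∀ f, E (S f) = S (E f) + (2 : ℂ) • S f) (f g h : J) (r : ℕ) (s : P ⊗[ℂ] P) :
    sym2 S E (sym2 S E f g (om ^ r)) h s = sym3 S E f g h (DL s * (om ⊗ₜ 1) ^ r) := by
  induction s with
  | zero => rw [map_zero]; exact (aux_zero (sym3 S E f g h) DL _).symm
  | add s s' e e' =>
    rw [map_add, e, e']
    exact (aux_add (sym3 S E f g h) DL _ s s').symm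
  | tmul x y =>
    simp only [sym2_tmul, key S E hES, DL, Algebra.TensorProduct.map_tmul,
      Algebra.TensorProduct.tmul_pow, Algebra.TensorProduct.tmul_mul_tmul, sym3_tmul]
    simp

lemma sym3_asc (f g h : J) (x : P) (t : P ⊗[ℂ] P) :
    sym3 S E f g h (asc (x ⊗ₜ t)) = sym S E f x * sym2 S E g h t := by
  induction t with
  | zero => simp
  | add s s' h h' => simp only [TensorProduct.tmul_add, mul_add, map_add, h, h']
  | tmul y z => simp [mul_assoc]

lemma right3 (hES : ∀ f, E (S f) = S (E f) + (2 : ℂ) • S f) (f g h : J) (r : ℕ) (s : P ⊗[ℂ] P) :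
    sym2 S E f (sym2 S E g h (om ^ r)) s = sym3 S E f g h (asc (DR s * (1 ⊗ₜ om) ^ r)) := by
  induction s with
  | zero => rw [map_zero]; exact (aux_zero (sym3 S E f g h ∘ₗ asc.toLinearMap) DR _).symm
  | add s s' e e' =>
    rw [map_add, e, e']
    exact (aux_add (sym3 S E f g h ∘ₗ asc.toLinearMap) DR _ s s').symm
  | tmul x y =>
    simp only [sym2_tmul, key S E hES, DR, Algebra.TensorProduct.map_tmul,
      Algebra.TensorProduct.tmul_pow, Algebra.TensorProduct.tmul_mul_tmul, sym3_asc]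
    simp

lemma expo {A : Type*} [Semiring A] [Algebra ℂ A] (L : A →ₗ[ℂ] J) (u v : A)
    (huv : v * u = u * v) (n : ℕ) :
    ∑ r ∈ range (n + 1), (((n - r).factorial : ℂ)⁻¹ * ((r.factorial : ℂ)⁻¹)) •
      L (u ^ (n - r) * v ^ r) = ((n.factorial : ℂ)⁻¹) • L ((v + u) ^ n) := by
  rw [Commute.add_pow huv, map_sum, Finset.smul_sum]
  refine Finset.sum_congr rfl fun r hr => ?_
  have hr' : r ≤ n := by simpa [Nat.lt_succ_iff] using hr
  rw [← Nat.cast_comm (n.choose r), ← nsmul_eq_mul, map_nsmul, ← Nat.cast_smul_eq_nsmul ℂ, smul_smul,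
    Nat.cast_choose ℂ hr', ((show Commute v u from huv).pow_pow r (n - r)).eq]
  congr 1
  have := Nat.factorial_ne_zero n
  field_simp

lemma expo' {A A' : Type*} [Semiring A] [Algebra ℂ A] [Semiring A'] [Algebra ℂ A']
    (L : A →ₗ[ℂ] J) (D : A' →ₐ[ℂ] A) (u : A') (v : A)
    (huv : v * D u = D u * v) (n : ℕ) :
    ∑ r ∈ range (n + 1), (((n - r).factorial : ℂ)⁻¹ * ((r.factorial : ℂ)⁻¹)) •
      L (D (u ^ (n - r)) * v ^ r) = ((n.factorial : ℂ)⁻¹) • L ((v + D u) ^ n) := by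
  simp only [map_pow]
  exact expo L (D u) v huv n

lemma aux_pow {A A' : Type*} [Semiring A] [Algebra ℂ A] [Semiring A'] [Algebra ℂ A']
    (L : A →ₗ[ℂ] J) (D : A' →ₐ[ℂ] A) (u : A') (v : A) (h : v = D u) (n : ℕ) :
    L (v ^ n) = L (D (u ^ n)) := by rw [h, map_pow D]

lemma om_coh : om ⊗ₜ 1 + DL om = asc (1 ⊗ₜ om + DR om) := by
  simp only [om, DL, DR, map_sub, map_add, Algebra.TensorProduct.map_tmul, Dlt_X,
    TensorProduct.tmul_add, TensorProduct.add_tmul, TensorProduct.tmul_sub, TensorProduct.sub_tmul,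
    AlgHom.id_apply, asc_tmul]
  abel

lemma mu_assoc (hES : ∀ f, E (S f) = S (E f) + (2 : ℂ) • S f) (n : ℕ) (f g h : J) :
    ∑ r ∈ range (n + 1), mu S E (n - r) (mu S E r f g) h
      = ∑ r ∈ range (n + 1), mu S E (n - r) f (mu S E r g h) := by
  simp only [mu_apply, sym2_smul_left, sym2_smul_right, LinearMap.smul_apply, smul_smul,
    left3 S E hES, right3 S E hES]
  have h1 := expo' (sym3 S E f g h) DL om (om ⊗ₜ 1)
    (@mul_comm ((P ⊗[ℂ] P) ⊗[ℂ] P) Algebra.TensorProduct.instCommRing.toCommMonoid.toCommMagma _ _) n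
  have h2 := expo' (sym3 S E f g h ∘ₗ asc.toLinearMap) DR om (1 ⊗ₜ om)
    (@mul_comm (P ⊗[ℂ] (P ⊗[ℂ] P)) Algebra.TensorProduct.instCommRing.toCommMonoid.toCommMagma _ _) n
  refine h1.trans (Eq.trans ?_ h2.symm)
  congr 1
  exact aux_pow (sym3 S E f g h) asc _ _ om_coh n

lemma E_pow (hES : ∀ f, E (S f) = S (E f) + (2 : ℂ) • S f) (κ : ℂ) (f : J) (hf : E f = κ • f)
    (a : ℕ) : E ((S.toLinearMap ^ a) f) = (κ + 2 * a) • (S.toLinearMap ^ a) f := by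
  induction a with
  | zero => simp [hf]
  | succ a ih =>
    rw [pow_succ', Module.End.mul_apply, 
          Derivation.coeFn_coe, hES]
    rw [ih, Derivation.map_smul]; push_cast; module

lemma phi_eq (hES : ∀ f, E (S f) = S (E f) + (2 : ℂ) • S f) (κ : ℂ) (f : J) (hf : E f = κ • f)
    (a b : ℕ) : phi S E a b f =
      ((-1) ^ b * ∏ i ∈ range b, (κ + a + i)) • (S.toLinearMap ^ a) f := by
  induction b with
  | zero => simp [phi_zero_apply]
  | succ b ih =>
    rw [phi_succ_apply, ih, Derivation.map_smul, E_pow S E hES κ f hf, Finset.prod_range_succ, pow_succ]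
    module

lemma genBinom_eq (κ : ℂ) (a b n : ℕ) (h : a + b = n) :
    ∏ i ∈ range b, (κ + a + i) = (b.factorial : ℂ) * genBinom (κ + n - 1) b := by
  rw [genBinom, mul_div_cancel₀ _ (by exact_mod_cast b.factorial_ne_zero),
    ← Finset.prod_range_reflect]
  refine Finset.prod_congr rfl fun i hi => ?_
  have : i + 1 ≤ b := by simpa using hi
  rw [Nat.sub_sub, Nat.cast_sub (by omega), ← h]
  push_cast; ring

lemma mu_formula (hES : ∀ f, E (S f) = S (E f) + (2 : ℂ) • S f) (κ lam : ℂ) (f g : J)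
    (hf : E f = κ • f) (hg : E g = lam • g) (n : ℕ) :
    mu S E n f g = ∑ r ∈ range (n + 1),
          ((-1 : ℂ) ^ r * genBinom (κ + n - 1) (n - r)
              * genBinom (lam + n - 1) r) •
            ((S.toLinearMap ^ r) f * (S.toLinearMap ^ (n - r)) g) := by
  have hom : om = -((X 1) ⊗ₜ (X 0)) + (X 0) ⊗ₜ (X 1) := by rw [om]; abel
  have := expo (sym2 S E f g) (-((X 1 : P) ⊗ₜ[ℂ] (X 0 : P))) ((X 0) ⊗ₜ (X 1)) (mul_comm _ _) n
  rw [add_comm (_ ⊗ₜ _), ← hom] at this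
  rw [mu_apply, ← this]
  refine Finset.sum_congr rfl fun r hr => ?_
  have hr' : r ≤ n := by simpa [Nat.lt_succ_iff] using hr
  rw [neg_pow ((X 1 : P) ⊗ₜ[ℂ] (X 0 : P)), Algebra.TensorProduct.tmul_pow, Algebra.TensorProduct.tmul_pow, mul_assoc,
    Algebra.TensorProduct.tmul_mul_tmul, mul_comm (X 1 ^ _)]
  have h1 : ((-1 : P ⊗[ℂ] P)) ^ (n - r) = algebraMap ℂ _ ((-1) ^ (n - r)) := by
    rw [map_pow, map_neg, map_one]
  rw [h1, ← Algebra.smul_def, map_smul, sym2_tmul, sym_mono, sym_mono,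
    phi_eq S E hES κ f hf, phi_eq S E hES lam g hg,
    genBinom_eq κ r (n - r) n (by omega), genBinom_eq lam (n - r) r n (by omega),
    smul_mul_smul_comm, smul_smul, smul_smul]
  congr 1
  have e1 : ((-1 : ℂ) ^ (n - r)) * (-1) ^ (n - r) = 1 := by rw [← mul_pow]; simp
  have e2 := (n - r).factorial_ne_zero
  have e3 := r.factorial_ne_zero
  have e2' : ((n - r).factorial : ℂ) ≠ 0 := by exact_mod_cast e2
  have e3' : (r.factorial : ℂ) ≠ 0 := by exact_mod_cast e3
  field_simp
  linear_combination (genBinom (κ + n - 1) (n - r) * genBinom (lam + n - 1) r) * e1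

end gen
end
end RC

namespace RC
noncomputable section

/-- complex weights of the generators -/
def cw (c : ℂ) (i : Fin 4) : ℂ := ((jacWt i).1 : ℂ) + c * ((jacWt i).2 : ℂ)

/-- the Euler derivation -/
def eul (c : ℂ) : Derivation ℂ (MvPolynomial (Fin 4) ℂ) (MvPolynomial (Fin 4) ℂ) :=
  mkDerivation ℂ (fun i => cw c i • X i)

lemma eul_X (c : ℂ) (i : Fin 4) : eul c (X i) = cw c i • X i := by
  rw [eul, mkDerivation_X]

lemma der_eq (D : Derivation ℂ (MvPolynomial (Fin 4) ℂ) (MvPolynomial (Fin 4) ℂ))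
    (f : MvPolynomial (Fin 4) ℂ) : D f = ∑ i, D (X i) * pderiv i f := by
  have : D = ∑ i, D (X i) • pderiv i := by
    apply derivation_ext
    intro j
    rw [Fin.sum_univ_four]
    fin_cases j <;> simp [pderiv_X, Pi.single_apply]
  conv_lhs => rw [this]
  simp [Fin.sum_univ_four]

lemma eul_homog (c : ℂ) (k p : ℤ) (f : MvPolynomial (Fin 4) ℂ)
    (hf : f ∈ weightedHomogeneousSubmodule ℂ jacWt (k, p)) :
    eul c f = ((k : ℂ) + c * (p : ℂ)) • f := by
  rw [mem_weightedHomogeneousSubmodule] at hf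
  induction hf using IsWeightedHomogeneous.induction_on with
  | zero => simp
  | add p q hp hq h h' => rw [map_add, h, h', smul_add]
  | monomial d r hr =>
    rw [der_eq]
    simp only [eul_X, smul_mul_assoc, X_mul_pderiv_monomial]
    simp only [← Nat.cast_smul_eq_nsmul ℂ, smul_smul, ← Finset.sum_smul]
    congr 1
    rw [Finsupp.weight_apply, Finsupp.sum_fintype _ _ (by simp)] at hr
    have h1 := congrArg Prod.fst hr
    have h2 := congrArg Prod.snd hr
    rw [Prod.fst_sum] at h1
    rw [Prod.snd_sum] at h2
    simp only [Prod.smul_fst, Prod.smul_snd] at h1 h2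
    rw [← h1, ← h2]
    simp only [cw]
    push_cast
    rw [Finset.mul_sum, ← Finset.sum_add_distrib]
    refine Finset.sum_congr rfl fun i _ => ?_
    simp only [nsmul_eq_mul]; push_cast; ring

variable (a b c : ℂ)
    (S : Derivation ℂ (MvPolynomial (Fin 4) ℂ) (MvPolynomial (Fin 4) ℂ))
    (hS4 : S (X 0) = (-(1/3) : ℂ) • X 1)
    (hS6 : S (X 1) = (-(1/2) : ℂ) • X 0 ^ 2)
    (hSA : S (X 2) = a • X 3)
    (hSB : S (X 3) = b • (X 0 * X 2))

lemma S_X (hS4 : S (X 0) = (-(1/3) : ℂ) • X 1)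
    (hS6 : S (X 1) = (-(1/2) : ℂ) • X 0 ^ 2)
    (hSA : S (X 2) = a • X 3)
    (hSB : S (X 3) = b • (X 0 * X 2)) (i : Fin 4) :
    S (X i) ∈ weightedHomogeneousSubmodule ℂ jacWt (jacWt i + (2, 0)) := by
  have hX := fun i => isWeightedHomogeneous_X ℂ jacWt i
  fin_cases i
  · change S (X 0) ∈ _
    rw [hS4]
    exact Submodule.smul_mem _ _ (hX 1)
  · change S (X 1) ∈ _
    rw [hS6]
    exact Submodule.smul_mem _ _ ((hX 0).pow 2)
  · change S (X 2) ∈ _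
    rw [hSA]
    exact Submodule.smul_mem _ _ (hX 3)
  · change S (X 3) ∈ _
    rw [hSB]
    exact Submodule.smul_mem _ _ ((hX 0).mul (hX 2))

lemma S_homog (hSX : ∀ i, S (X i) ∈ weightedHomogeneousSubmodule ℂ jacWt (jacWt i + (2, 0)))
    (n : ℤ × ℤ) (f : MvPolynomial (Fin 4) ℂ) (hf : f ∈ weightedHomogeneousSubmodule ℂ jacWt n) :
    S f ∈ weightedHomogeneousSubmodule ℂ jacWt (n + (2, 0)) := by
  rw [der_eq]
  refine Submodule.sum_mem _ fun i _ => ?_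
  have h1 : (pderiv i f).IsWeightedHomogeneous jacWt (n - jacWt i) :=
    IsWeightedHomogeneous.pderiv hf (by abel)
  have h2 := IsWeightedHomogeneous.mul (hSX i) h1
  rw [show jacWt i + (2, 0) + (n - jacWt i) = n + (2, 0) by abel] at h2
  exact h2

lemma Spow_homog (hSX : ∀ i, S (X i) ∈ weightedHomogeneousSubmodule ℂ jacWt (jacWt i + (2, 0)))
    (k p : ℤ) (f : MvPolynomial (Fin 4) ℂ) (hf : f ∈ weightedHomogeneousSubmodule ℂ jacWt (k, p))
    (r : ℕ) : (S.toLinearMap ^ r) f ∈ weightedHomogeneousSubmodule ℂ jacWt (k + 2 * r, p) := by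
  induction r with
  | zero => simpa using hf
  | succ r ih =>
    rw [pow_succ', Module.End.mul_apply]
    have := S_homog S hSX _ _ ih
    rw [Prod.mk_add_mk, add_zero, show k + 2 * (r : ℤ) + 2 = k + 2 * ((r + 1 : ℕ) : ℤ) by
      push_cast; ring] at this
    exact this

lemma comm_ES (hSX : ∀ i, S (X i) ∈ weightedHomogeneousSubmodule ℂ jacWt (jacWt i + (2, 0)))
    (f : MvPolynomial (Fin 4) ℂ) :
    eul c (S f) = S (eul c f) + (2 : ℂ) • S f := by
  have : ⁅eul c, S⁆ = (2 : ℂ) • S := by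
    apply derivation_ext
    intro i
    have h := eul_homog c ((jacWt i).1 + 2) ((jacWt i).2 + 0) _ (hSX i)
    rw [Derivation.commutator_apply, h, eul_X, Derivation.map_smul, Derivation.smul_apply, cw]
    push_cast
    module
  have h := congrArg (fun D => D f) this
  simp only [Derivation.commutator_apply, Derivation.smul_apply] at h
  rw [← h]; abel

end
end RC

/-- In `J = ℂ[E4,E6,A,B]` (`E4 = X 0`, `E6 = X 1`, `A = X 2`, `B = X 3`)
with the derivation `S_{a,b}`, the brackets `{f,g}_n^{[a,b,c]}` (defined by bilinear
extension of the Rankin-Cohen formula on bihomogeneous elements) form a formal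
deformation of `J` mapping `J_{k,p} × J_{ℓ,q}` into `J_{k+ℓ+2n, p+q}`. -/
theorem stmt10 (a b c : ℂ)
    (S : Derivation ℂ (MvPolynomial (Fin 4) ℂ) (MvPolynomial (Fin 4) ℂ))
    (hS4 : S (X 0) = (-(1/3) : ℂ) • X 1)
    (hS6 : S (X 1) = (-(1/2) : ℂ) • X 0 ^ 2)
    (hSA : S (X 2) = a • X 3)
    (hSB : S (X 3) = b • (X 0 * X 2)) :
    ∃ μ : ℕ → MvPolynomial (Fin 4) ℂ →ₗ[ℂ]
        MvPolynomial (Fin 4) ℂ →ₗ[ℂ] MvPolynomial (Fin 4) ℂ,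
      (∀ (n : ℕ) (k p ℓ q : ℤ) (f g : MvPolynomial (Fin 4) ℂ),
        f ∈ weightedHomogeneousSubmodule ℂ jacWt (k, p) →
        g ∈ weightedHomogeneousSubmodule ℂ jacWt (ℓ, q) →
        μ n f g = ∑ r ∈ range (n + 1),
          ((-1 : ℂ) ^ r * genBinom ((k : ℂ) + c * (p : ℂ) + n - 1) (n - r)
              * genBinom ((ℓ : ℂ) + c * (q : ℂ) + n - 1) r) •
            ((S.toLinearMap ^ r) f * (S.toLinearMap ^ (n - r)) g)) ∧
      (∀ f g, μ 0 f g = f * g) ∧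
      (∀ (n : ℕ) (f g h : MvPolynomial (Fin 4) ℂ),
        ∑ r ∈ range (n + 1), μ (n - r) (μ r f g) h
          = ∑ r ∈ range (n + 1), μ (n - r) f (μ r g h)) ∧
      (∀ (n : ℕ) (k p ℓ q : ℤ) (f g : MvPolynomial (Fin 4) ℂ),
        f ∈ weightedHomogeneousSubmodule ℂ jacWt (k, p) →
        g ∈ weightedHomogeneousSubmodule ℂ jacWt (ℓ, q) →
        μ n f g ∈ weightedHomogeneousSubmodule ℂ jacWt (k + ℓ + 2 * n, p + q)) := by
  have hSX := RC.S_X a b S hS4 hS6 hSA hSB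
  have hES := RC.comm_ES c S hSX
  have hform : ∀ (n : ℕ) (k p ℓ q : ℤ) (f g : MvPolynomial (Fin 4) ℂ),
        f ∈ weightedHomogeneousSubmodule ℂ jacWt (k, p) →
        g ∈ weightedHomogeneousSubmodule ℂ jacWt (ℓ, q) →
        RC.mu S (RC.eul c) n f g = ∑ r ∈ range (n + 1),
          ((-1 : ℂ) ^ r * genBinom ((k : ℂ) + c * (p : ℂ) + n - 1) (n - r)
              * genBinom ((ℓ : ℂ) + c * (q : ℂ) + n - 1) r) •
            ((S.toLinearMap ^ r) f * (S.toLinearMap ^ (n - r)) g) :=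
    fun n k p ℓ q f g hf hg => RC.mu_formula S (RC.eul c) hES _ _ f g
      (RC.eul_homog c k p f hf) (RC.eul_homog c ℓ q g hg) n
  refine ⟨RC.mu S (RC.eul c), hform, RC.mu_zero S (RC.eul c), RC.mu_assoc S (RC.eul c) hES, ?_⟩
  intro n k p ℓ q f g hf hg
  rw [hform n k p ℓ q f g hf hg]
  refine Submodule.sum_mem _ fun r hr => Submodule.smul_mem _ _ ?_
  have hr' : r ≤ n := by simpa [Nat.lt_succ_iff] using hr
  have h := IsWeightedHomogeneous.mul (RC.Spow_homog S hSX k p f hf r)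
    (RC.Spow_homog S hSX ℓ q g hg (n - r))
  rw [Prod.mk_add_mk, show k + 2 * (r : ℤ) + (ℓ + 2 * ((n - r : ℕ) : ℤ)) = k + ℓ + 2 * n by
    rw [Nat.cast_sub hr']; ring] at h
  exact h
end
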